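/- arXiv:2203.01632 — 4 statements merged into one kernel-verified Lean document; each statement's English description precedes it below -/
import Mathlib

section
/- Let a > 0, real numbers c₁ < c₂, and a real number c₀ with |c₀|·(c₂ − c₁) < min(√a, 1). Let (λₙ) be a sequence of positive reals with λₙ → ∞. For each n, let uₙ, yₙ : [c₁,c₂] → ℂ be twice continuously differentiable, f₁ₙ, f₃ₙ : [c₁,c₂] → ℂ continuously differentiable, and f₂ₙ, f₄ₙ : [c₁,c₂] → ℂ continuous, satisfying for all x ∈ [c₁,c₂]: λₙ²uₙ + a·uₙ″ − iλₙ·c₀·yₙ = −λₙ^{-1/2}f₂ₙ − iλₙ^{1/2}f₁ₙ − λₙ^{-1/2}c₀f₃ₙ and λₙ²yₙ + yₙ″ + iλₙ·c₀·uₙ = −λₙ^{-1/2}f₄ₙ − iλₙ^{1/2}f₃ₙ + λₙ^{-1/2}c₀f₁ₙ. Assume: λₙ·uₙ(c₁) → 0, uₙ′(c₁) → 0, λₙ·yₙ(c₂) → 0, yₙ′(c₂) → 0; sup_n ∫_{c₁}^{c₂}(λₙ²|uₙ|² + |uₙ′|² + λₙ²|yₙ|² + |yₙ′|²) dx < ∞;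 ∫_{c₁}^{c₂}(|f₁ₙ|² + |f₁ₙ′|² + |f₂ₙ|² + |f₃ₙ|² + |f₃ₙ′|² + |f₄ₙ|²) dx → 0; and sup_n sup_{x∈[c₁,c₂]}(|f₁ₙ(x)| + |f₃ₙ(x)|) < ∞. Then ∫_{c₁}^{c₂}(λₙ²|uₙ|² + a|uₙ′|² + λₙ²|yₙ|² + |yₙ′|²) dx → 0 as n → ∞. -/
/-!
The proof is the Rellich multiplier argument in pointwise form. For a solution `w` of
`l² w + b w'' = G - i s f`, the flux
`Φ(x) = (x - p) (l² |w|² + b |w'|²) + 2 s (x - p) Re (i f w̄)` satisfies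
`Φ' = l² |w|² + b |w'|² + 2 (x - p) Re (G w̄') + 2 s Re (i (f + (x - p) f') w̄)`:
the second term of `Φ` moves the derivative from `w̄'` to `f`, where the large factor `s = l^(1/2)`
is harmless, since `s |w| = l^(-1/2) (l |w|)` (`exists_hasDerivAt_flux`).

Take `p = c₂` for `u` and `p = c₁` for `y`. Both fluxes together see only the Cauchy data of `u` at
`c₁` and of `y` at `c₂`. The coupling terms are at most
`2 |c₀| (c₂ - c₁) (l |y| |u'| + l |u| |y'|) ≤ θ · (energy density)` with `θ < 1`, by the smallness
condition (`coupling_le`), and all other terms are `O(l^(-1/2))` times an integrable quantity with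
bounded integral (`forcing_le`). Integrating gives (`energy_integral_le`)
`(1 - θ) · energy ≤ boundary terms + K l^(-1/2) (∫ |forcing|² + ∫ (unweighted energy))`,
whose right-hand side tends to `0`.
-/

open Filter

/-- The multiplier flux for `w` with weight `x - p`, corrected by the boundary term that arises from
integrating the forcing `f` by parts. Note `inner ℝ (I * f) w = Re (i f w̄)`. -/
noncomputable def flux (l b s p : ℝ) (w w' f : ℝ → ℂ) (x : ℝ) : ℝ :=
  (x - p) * (l ^ 2 * ‖w x‖ ^ 2 + b * ‖w' x‖ ^ 2)
    + 2 * s * ((x - p) * inner ℝ (Complex.I * f x) (w x))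

/-- The pointwise multiplier inequality: the energy density of `w` is controlled by the derivative
of the flux, up to the source `G` and the forcing terms. -/
lemma exists_hasDerivAt_flux {l b s p L x : ℝ} {w w' f : ℝ → ℂ} {w'' f' G : ℂ}
    (hs : 0 ≤ s) (hw : HasDerivAt w (w' x) x) (hw' : HasDerivAt w' w'' x)
    (hf : HasDerivAt f f' x) (hL : |x - p| ≤ L)
    (heq : (l : ℂ) ^ 2 * w x + (b : ℂ) * w'' = G - Complex.I * (s : ℂ) * f x) :
    ∃ d, HasDerivAt (flux l b s p w w' f) d x ∧
      l ^ 2 * ‖w x‖ ^ 2 + b * ‖w' x‖ ^ 2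
        ≤ d + 2 * L * (‖G‖ * ‖w' x‖) + 2 * s * ((‖f x‖ + L * ‖f'‖) * ‖w x‖) := by
  have hx : HasDerivAt (fun x : ℝ => x - p) 1 x := (hasDerivAt_id x).sub_const p
  have h1 := hx.mul ((hw.norm_sq.const_mul (l ^ 2)).add (hw'.norm_sq.const_mul b))
  have h2 := (hx.mul ((hf.const_mul Complex.I).inner ℝ hw)).const_mul (2 * s)
  refine ⟨_, h1.add h2, ?_⟩
  have key : l ^ 2 * inner ℝ (w x) (w' x) + b * inner ℝ (w' x) w''
      = inner ℝ G (w' x) - s * inner ℝ (Complex.I * f x) (w' x) := by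
    have hre := congrArg Complex.re heq
    have him := congrArg Complex.im heq
    simp [pow_two] at hre him
    simp [Complex.inner]
    linear_combination (w' x).re * hre + (w' x).im * him
  have bd : ∀ A B C : ℝ, |A| ≤ B → |C| ≤ L → -(C * A) ≤ L * B := fun A B C hA hC =>
    (neg_le_abs _).trans (by rw [abs_mul]; gcongr; exact (abs_nonneg _).trans hC)
  have b1 := bd _ _ _ (abs_real_inner_le_norm G (w' x)) hL
  have b2 := bd _ _ _ (abs_real_inner_le_norm (Complex.I * f') (w x)) hL
  have b3 := neg_le_of_abs_le (abs_real_inner_le_norm (Complex.I * f x) (w x))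
  simp only [norm_mul, Complex.norm_I, one_mul] at b2 b3
  have b4 := mul_le_mul_of_nonneg_left b2 hs
  have b5 := mul_le_mul_of_nonneg_left b3 hs
  simp only [Pi.add_apply]
  nlinarith [key, congrArg (fun t => 2 * (x - p) * t) key]

/-- The coupling terms are absorbed by the energy density, with `m = |c₀| (c₂ - c₁)` and `r = √a`;
`U` and `Y` stand for `l |u|` and `l |y|`. -/
lemma coupling_le {m θ r U U' Y Y' : ℝ} (hθr : m ≤ θ * r) (hθ : m ≤ θ)
    (hU : 0 ≤ U) (hU' : 0 ≤ U') (hY : 0 ≤ Y) (hY' : 0 ≤ Y') (hθ0 : 0 ≤ θ) :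
    2 * m * (Y * U' + U * Y') ≤ θ * (U ^ 2 + r ^ 2 * U' ^ 2 + Y ^ 2 + Y' ^ 2) := by
  have h1 := mul_le_mul_of_nonneg_right hθr (mul_nonneg hY hU')
  have h2 := mul_le_mul_of_nonneg_right hθ (mul_nonneg hU hY')
  have h3 := mul_nonneg hθ0 (sq_nonneg (Y - r * U'))
  have h4 := mul_nonneg hθ0 (sq_nonneg (U - Y'))
  nlinarith

/-- Young's inequality for all the forcing terms at once; `U` and `Y` stand for `l |u|` and
`l |y|`. -/
lemma forcing_le {L k U U' Y Y' F₁ F₁' F₂ F₃ F₃' F₄ : ℝ} (hL : 0 ≤ L) (hk : 0 ≤ k) :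
    2 * L * ((F₂ + k * F₃) * U') + 2 * ((F₁ + L * F₁') * U)
      + (2 * L * ((F₄ + k * F₁) * Y') + 2 * ((F₃ + L * F₃') * Y))
      ≤ (1 + L + L * k) * ((F₁ ^ 2 + F₁' ^ 2 + F₂ ^ 2 + F₃ ^ 2 + F₃' ^ 2 + F₄ ^ 2)
          + (U ^ 2 + U' ^ 2 + Y ^ 2 + Y' ^ 2)) := by
  have hLk := mul_nonneg hL hk
  have e1 := mul_nonneg hL (sq_nonneg (F₂ - U'))
  have e2 := mul_nonneg hLk (sq_nonneg (F₃ - U'))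
  have e3 := sq_nonneg (F₁ - U)
  have e4 := mul_nonneg hL (sq_nonneg (F₁' - U))
  have e5 := mul_nonneg hL (sq_nonneg (F₄ - Y'))
  have e6 := mul_nonneg hLk (sq_nonneg (F₁ - Y'))
  have e8 := mul_nonneg hL (sq_nonneg (F₃' - Y))
  have e7 := sq_nonneg (F₃ - Y)
  -- The common constant `1 + L + L * k` exceeds the one each square needs; this is the excess.
  have p1 : 0 ≤ L * (F₁ ^ 2 + F₃ ^ 2) := by positivity
  have p2 : 0 ≤ (1 + L * k) * (F₁' ^ 2 + F₃' ^ 2 + F₂ ^ 2 + F₄ ^ 2) := by positivity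
  have p3 : 0 ≤ L * k * (U ^ 2 + Y ^ 2) + (U' ^ 2 + Y' ^ 2) := by positivity
  nlinarith

/-- The integrated estimate at a fixed frequency `l`, with `s = l^(1/2)` and `ε = l^(-1/2)`. -/
lemma energy_integral_le {a c₁ c₂ c₀ l s ε θ : ℝ} (ha : 0 < a) (hc : c₁ < c₂)
    (hl : 0 < l) (hs : s = ε * l) (hε : 0 ≤ ε) (hθ0 : 0 ≤ θ)
    (hθr : |c₀| * (c₂ - c₁) ≤ θ * Real.sqrt a) (hθ : |c₀| * (c₂ - c₁) ≤ θ)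
    {u u' u'' y y' y'' f₁ f₁' f₂ f₃ f₃' f₄ : ℝ → ℂ}
    (hu : ∀ x ∈ Set.Icc c₁ c₂, HasDerivAt u (u' x) x)
    (hu' : ∀ x ∈ Set.Icc c₁ c₂, HasDerivAt u' (u'' x) x)
    (hy : ∀ x ∈ Set.Icc c₁ c₂, HasDerivAt y (y' x) x)
    (hy' : ∀ x ∈ Set.Icc c₁ c₂, HasDerivAt y' (y'' x) x)
    (hf₁ : ∀ x ∈ Set.Icc c₁ c₂, HasDerivAt f₁ (f₁' x) x)
    (hf₁'c : ContinuousOn f₁' (Set.Icc c₁ c₂))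
    (hf₃ : ∀ x ∈ Set.Icc c₁ c₂, HasDerivAt f₃ (f₃' x) x)
    (hf₃'c : ContinuousOn f₃' (Set.Icc c₁ c₂))
    (hf₂c : ContinuousOn f₂ (Set.Icc c₁ c₂)) (hf₄c : ContinuousOn f₄ (Set.Icc c₁ c₂))
    (hequ : ∀ x ∈ Set.Icc c₁ c₂,
      (l : ℂ) ^ 2 * u x + (a : ℂ) * u'' x - Complex.I * l * c₀ * y x
        = -(ε : ℂ) * f₂ x - Complex.I * (s : ℂ) * f₁ x - (ε : ℂ) * c₀ * f₃ x)
    (heqy : ∀ x ∈ Set.Icc c₁ c₂,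
      (l : ℂ) ^ 2 * y x + y'' x + Complex.I * l * c₀ * u x
        = -(ε : ℂ) * f₄ x - Complex.I * (s : ℂ) * f₃ x + (ε : ℂ) * c₀ * f₁ x) :
    (1 - θ) * (∫ x in c₁..c₂, (l ^ 2 * ‖u x‖ ^ 2 + a * ‖u' x‖ ^ 2
        + l ^ 2 * ‖y x‖ ^ 2 + ‖y' x‖ ^ 2))
      ≤ (flux l a s c₂ u u' f₁ c₂ + flux l 1 s c₁ y y' f₃ c₂
          - (flux l a s c₂ u u' f₁ c₁ + flux l 1 s c₁ y y' f₃ c₁))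
        + ε * (1 + (c₂ - c₁) + (c₂ - c₁) * |c₀|) *
          ((∫ x in c₁..c₂, (‖f₁ x‖ ^ 2 + ‖f₁' x‖ ^ 2 + ‖f₂ x‖ ^ 2
              + ‖f₃ x‖ ^ 2 + ‖f₃' x‖ ^ 2 + ‖f₄ x‖ ^ 2))
            + ∫ x in c₁..c₂, (l ^ 2 * ‖u x‖ ^ 2 + ‖u' x‖ ^ 2
              + l ^ 2 * ‖y x‖ ^ 2 + ‖y' x‖ ^ 2)) := by
  have hL : 0 ≤ c₂ - c₁ := by linarith
  set L := c₂ - c₁ with hLdef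
  have cont : ∀ {g g' : ℝ → ℂ}, (∀ x ∈ Set.Icc c₁ c₂, HasDerivAt g (g' x) x) →
      ContinuousOn g (Set.Icc c₁ c₂) := fun h x hx => (h x hx).continuousAt.continuousWithinAt
  have cu := cont hu
  have cu' := cont hu'
  have cy := cont hy
  have cy' := cont hy'
  have cf₁ := cont hf₁
  have cf₃ := cont hf₃
  have hs0 : 0 ≤ s := by rw [hs]; positivity
  have main : ∀ x ∈ Set.Icc c₁ c₂, ∃ d,
      HasDerivAt (fun x => flux l a s c₂ u u' f₁ x + flux l 1 s c₁ y y' f₃ x) d x ∧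
      (1 - θ) * (l ^ 2 * ‖u x‖ ^ 2 + a * ‖u' x‖ ^ 2 + l ^ 2 * ‖y x‖ ^ 2 + ‖y' x‖ ^ 2)
        - ε * (1 + L + L * |c₀|) *
          ((‖f₁ x‖ ^ 2 + ‖f₁' x‖ ^ 2 + ‖f₂ x‖ ^ 2 + ‖f₃ x‖ ^ 2 + ‖f₃' x‖ ^ 2 + ‖f₄ x‖ ^ 2)
            + (l ^ 2 * ‖u x‖ ^ 2 + ‖u' x‖ ^ 2 + l ^ 2 * ‖y x‖ ^ 2 + ‖y' x‖ ^ 2)) ≤ d := by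
    intro x hx
    obtain ⟨d₁, hd₁, e₁⟩ := exists_hasDerivAt_flux (l := l) (b := a) (p := c₂) (L := L)
      (G := Complex.I * l * c₀ * y x - ε * f₂ x - ε * c₀ * f₃ x) hs0 (hu x hx) (hu' x hx)
      (hf₁ x hx) (by rw [abs_le]; constructor <;> linarith [hx.1, hx.2])
      (by linear_combination hequ x hx)
    obtain ⟨d₂, hd₂, e₂⟩ := exists_hasDerivAt_flux (l := l) (b := 1) (p := c₁) (L := L)
      (G := -(Complex.I * l * c₀ * u x) - ε * f₄ x + ε * c₀ * f₁ x) hs0 (hy x hx) (hy' x hx)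
      (hf₃ x hx) (by rw [abs_le]; constructor <;> linarith [hx.1, hx.2])
      (by push_cast; linear_combination heqy x hx)
    refine ⟨d₁ + d₂, hd₁.add hd₂, ?_⟩
    have g₁ : ‖Complex.I * l * c₀ * y x - ε * f₂ x - ε * c₀ * f₃ x‖
        ≤ |c₀| * (l * ‖y x‖) + ε * (‖f₂ x‖ + |c₀| * ‖f₃ x‖) := by
      refine (norm_sub_le _ _).trans ((add_le_add_left (norm_sub_le _ _) _).trans (le_of_eq ?_))
      simp [abs_of_pos hl, abs_of_nonneg hε]
      ring
    have g₂ : ‖-(Complex.I * l * c₀ * u x) - ε * f₄ x + ε * c₀ * f₁ x‖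
        ≤ |c₀| * (l * ‖u x‖) + ε * (‖f₄ x‖ + |c₀| * ‖f₁ x‖) := by
      refine (norm_add_le _ _).trans ((add_le_add_left (norm_sub_le _ _) _).trans (le_of_eq ?_))
      simp [abs_of_pos hl, abs_of_nonneg hε]
      ring
    have g₁' := mul_le_mul_of_nonneg_left
      (mul_le_mul_of_nonneg_right g₁ (norm_nonneg (u' x))) (by positivity : 0 ≤ 2 * L)
    have g₂' := mul_le_mul_of_nonneg_left
      (mul_le_mul_of_nonneg_right g₂ (norm_nonneg (y' x))) (by positivity : 0 ≤ 2 * L)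
    have C := coupling_le (U := l * ‖u x‖) (U' := ‖u' x‖) (Y := l * ‖y x‖) (Y' := ‖y' x‖)
      hθr hθ (by positivity) (by positivity) (by positivity) (by positivity) hθ0
    rw [Real.sq_sqrt ha.le] at C
    have D := mul_le_mul_of_nonneg_left (forcing_le (L := L) (k := |c₀|) (U := l * ‖u x‖)
      (U' := ‖u' x‖) (Y := l * ‖y x‖) (Y' := ‖y' x‖) (F₁ := ‖f₁ x‖) (F₁' := ‖f₁' x‖)
      (F₂ := ‖f₂ x‖) (F₃ := ‖f₃ x‖) (F₃' := ‖f₃' x‖) (F₄ := ‖f₄ x‖) hL (abs_nonneg c₀)) hε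
    rw [hs] at e₁ e₂
    linarith
  choose! d hd hle using main
  have iE : ContinuousOn (fun x => l ^ 2 * ‖u x‖ ^ 2 + a * ‖u' x‖ ^ 2
      + l ^ 2 * ‖y x‖ ^ 2 + ‖y' x‖ ^ 2) (Set.Icc c₁ c₂) := by fun_prop
  have iF : ContinuousOn (fun x => ‖f₁ x‖ ^ 2 + ‖f₁' x‖ ^ 2 + ‖f₂ x‖ ^ 2
      + ‖f₃ x‖ ^ 2 + ‖f₃' x‖ ^ 2 + ‖f₄ x‖ ^ 2) (Set.Icc c₁ c₂) := by fun_prop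
  have iH : ContinuousOn (fun x => l ^ 2 * ‖u x‖ ^ 2 + ‖u' x‖ ^ 2
      + l ^ 2 * ‖y x‖ ^ 2 + ‖y' x‖ ^ 2) (Set.Icc c₁ c₂) := by fun_prop
  have I := intervalIntegral.integral_le_sub_of_hasDeriv_right_of_le hc.le
    (fun x hx => (hd x hx).continuousAt.continuousWithinAt)
    (fun x hx => (hd x (Set.Ioo_subset_Icc_self hx)).hasDerivWithinAt)
    (ContinuousOn.integrableOn_Icc (by fun_prop))
    (fun x hx => hle x (Set.Ioo_subset_Icc_self hx))
  have jE := iE.intervalIntegrable_of_Icc (μ := MeasureTheory.volume) hc.le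
  have jF := iF.intervalIntegrable_of_Icc (μ := MeasureTheory.volume) hc.le
  have jH := iH.intervalIntegrable_of_Icc (μ := MeasureTheory.volume) hc.le
  rw [intervalIntegral.integral_sub (jE.const_mul _) ((jF.add jH).const_mul _),
    intervalIntegral.integral_const_mul, intervalIntegral.integral_const_mul,
    intervalIntegral.integral_add jF jH] at I
  linarith




/-- Asymptotic vanishing of the localized energy on the coupling
region in the proof of the `t⁻⁴` polynomial decay (Case 1). -/
theorem coupling_region_energy_estimate_case1
    (a c₁ c₂ c₀ : ℝ) (ha : 0 < a) (hc : c₁ < c₂)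
    (hsmall : |c₀| * (c₂ - c₁) < min (Real.sqrt a) 1)
    (lam : ℕ → ℝ) (hlampos : ∀ n, 0 < lam n)
    (hlam : Tendsto lam atTop atTop)
    (u u' u'' y y' y'' f₁ f₁' f₂ f₃ f₃' f₄ : ℕ → ℝ → ℂ)
    (hu : ∀ n, ∀ x ∈ Set.Icc c₁ c₂, HasDerivAt (u n) (u' n x) x)
    (hu' : ∀ n, ∀ x ∈ Set.Icc c₁ c₂, HasDerivAt (u' n) (u'' n x) x)
    (hu''c : ∀ n, ContinuousOn (u'' n) (Set.Icc c₁ c₂))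
    (hy : ∀ n, ∀ x ∈ Set.Icc c₁ c₂, HasDerivAt (y n) (y' n x) x)
    (hy' : ∀ n, ∀ x ∈ Set.Icc c₁ c₂, HasDerivAt (y' n) (y'' n x) x)
    (hy''c : ∀ n, ContinuousOn (y'' n) (Set.Icc c₁ c₂))
    (hf₁ : ∀ n, ∀ x ∈ Set.Icc c₁ c₂, HasDerivAt (f₁ n) (f₁' n x) x)
    (hf₁'c : ∀ n, ContinuousOn (f₁' n) (Set.Icc c₁ c₂))
    (hf₃ : ∀ n, ∀ x ∈ Set.Icc c₁ c₂, HasDerivAt (f₃ n) (f₃' n x) x)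
    (hf₃'c : ∀ n, ContinuousOn (f₃' n) (Set.Icc c₁ c₂))
    (hf₂c : ∀ n, ContinuousOn (f₂ n) (Set.Icc c₁ c₂))
    (hf₄c : ∀ n, ContinuousOn (f₄ n) (Set.Icc c₁ c₂))
    (hequ : ∀ n, ∀ x ∈ Set.Icc c₁ c₂,
      ((lam n : ℂ)) ^ 2 * u n x + (a : ℂ) * u'' n x
          - Complex.I * lam n * c₀ * y n x
        = -(((lam n ^ (-(1 : ℝ) / 2) : ℝ) : ℂ)) * f₂ n x
          - Complex.I * ((lam n ^ ((1 : ℝ) / 2) : ℝ) : ℂ) * f₁ n x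
          - ((lam n ^ (-(1 : ℝ) / 2) : ℝ) : ℂ) * c₀ * f₃ n x)
    (heqy : ∀ n, ∀ x ∈ Set.Icc c₁ c₂,
      ((lam n : ℂ)) ^ 2 * y n x + y'' n x
          + Complex.I * lam n * c₀ * u n x
        = -(((lam n ^ (-(1 : ℝ) / 2) : ℝ) : ℂ)) * f₄ n x
          - Complex.I * ((lam n ^ ((1 : ℝ) / 2) : ℝ) : ℂ) * f₃ n x
          + ((lam n ^ (-(1 : ℝ) / 2) : ℝ) : ℂ) * c₀ * f₁ n x)
    (htr1 : Tendsto (fun n => (lam n : ℂ) * u n c₁) atTop (nhds 0))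
    (htr2 : Tendsto (fun n => u' n c₁) atTop (nhds 0))
    (htr3 : Tendsto (fun n => (lam n : ℂ) * y n c₂) atTop (nhds 0))
    (htr4 : Tendsto (fun n => y' n c₂) atTop (nhds 0))
    (hbdd : ∃ M : ℝ, ∀ n,
      (∫ x in c₁..c₂, ((lam n) ^ 2 * ‖u n x‖ ^ 2 + ‖u' n x‖ ^ 2
        + (lam n) ^ 2 * ‖y n x‖ ^ 2 + ‖y' n x‖ ^ 2)) ≤ M)
    (hF : Tendsto (fun n => ∫ x in c₁..c₂,
        (‖f₁ n x‖ ^ 2 + ‖f₁' n x‖ ^ 2 + ‖f₂ n x‖ ^ 2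
          + ‖f₃ n x‖ ^ 2 + ‖f₃' n x‖ ^ 2 + ‖f₄ n x‖ ^ 2)) atTop (nhds 0))
    (hFbdd : ∃ M : ℝ, ∀ n, ∀ x ∈ Set.Icc c₁ c₂, ‖f₁ n x‖ + ‖f₃ n x‖ ≤ M) :
    Tendsto (fun n => ∫ x in c₁..c₂,
        ((lam n) ^ 2 * ‖u n x‖ ^ 2 + a * ‖u' n x‖ ^ 2
          + (lam n) ^ 2 * ‖y n x‖ ^ 2 + ‖y' n x‖ ^ 2)) atTop (nhds 0) := by
  obtain ⟨M, hM⟩ := hbdd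
  obtain ⟨N, hN⟩ := hFbdd
  have hL : 0 < c₂ - c₁ := by linarith
  have hr : 0 < Real.sqrt a := Real.sqrt_pos.2 ha
  obtain ⟨hm1, hm2⟩ := lt_min_iff.1 hsmall
  obtain ⟨θ, hθ0, hθ1, hθr, hθ⟩ : ∃ θ : ℝ, 0 ≤ θ ∧ θ < 1 ∧
      |c₀| * (c₂ - c₁) ≤ θ * Real.sqrt a ∧ |c₀| * (c₂ - c₁) ≤ θ := by
    refine ⟨max (|c₀| * (c₂ - c₁) / Real.sqrt a) (|c₀| * (c₂ - c₁)), ?_, ?_, ?_, ?_⟩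
    · exact le_max_of_le_right (by positivity)
    · exact max_lt ((div_lt_one hr).2 hm1) hm2
    · rw [← div_le_iff₀ hr]
      exact le_max_left _ _
    · exact le_max_right _ _
  have hε : Tendsto (fun n => lam n ^ (-(1 : ℝ) / 2)) atTop (nhds 0) := by
    have := (tendsto_rpow_neg_atTop (y := (1 : ℝ) / 2) (by norm_num)).comp hlam
    simpa [neg_div, Function.comp_def] using this
  -- `l^(1/2) |w| = l^(-1/2) (l |w|)` makes the forcing part of the flux at the endpoint small.
  have bdry : ∀ (n : ℕ) (z g : ℂ), ‖g‖ ≤ N →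
      |lam n ^ ((1 : ℝ) / 2) * inner ℝ (Complex.I * g) z|
        ≤ lam n ^ (-(1 : ℝ) / 2) * (N * ‖(lam n : ℂ) * z‖) := by
    intro n z g hg
    have hp : (lam n) ^ ((1 : ℝ) / 2) = lam n ^ (-(1 : ℝ) / 2) * lam n := by
      rw [← Real.rpow_add_one (hlampos n).ne']; norm_num
    have h0 : 0 ≤ lam n ^ (-(1 : ℝ) / 2) := Real.rpow_nonneg (hlampos n).le _
    have hi := abs_real_inner_le_norm (Complex.I * g) z
    rw [norm_mul, Complex.norm_I, one_mul] at hi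
    have hl := (hlampos n).le
    rw [hp, abs_mul, abs_of_nonneg (mul_nonneg h0 hl), norm_mul, Complex.norm_real,
      Real.norm_of_nonneg hl, mul_assoc]
    refine mul_le_mul_of_nonneg_left ?_ h0
    calc lam n * |inner ℝ (Complex.I * g) z| ≤ lam n * (N * ‖z‖) := by
          gcongr; exact hi.trans (by gcongr)
      _ = N * (lam n * ‖z‖) := by ring
  have hE0 : ∀ n, 0 ≤ ∫ x in c₁..c₂, ((lam n) ^ 2 * ‖u n x‖ ^ 2 + a * ‖u' n x‖ ^ 2
      + (lam n) ^ 2 * ‖y n x‖ ^ 2 + ‖y' n x‖ ^ 2) := fun n =>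
    intervalIntegral.integral_nonneg hc.le fun x _ => by positivity
  have hlim : Tendsto (fun n => (1 - θ)⁻¹ * ((c₂ - c₁) *
      ((‖(lam n : ℂ) * y n c₂‖ ^ 2 + ‖y' n c₂‖ ^ 2
          + 2 * (lam n ^ (-(1 : ℝ) / 2) * (N * ‖(lam n : ℂ) * y n c₂‖)))
        + (‖(lam n : ℂ) * u n c₁‖ ^ 2 + a * ‖u' n c₁‖ ^ 2
          + 2 * (lam n ^ (-(1 : ℝ) / 2) * (N * ‖(lam n : ℂ) * u n c₁‖))))
      + lam n ^ (-(1 : ℝ) / 2) * (1 + (c₂ - c₁) + (c₂ - c₁) * |c₀|) *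
        ((∫ x in c₁..c₂, (‖f₁ n x‖ ^ 2 + ‖f₁' n x‖ ^ 2 + ‖f₂ n x‖ ^ 2
          + ‖f₃ n x‖ ^ 2 + ‖f₃' n x‖ ^ 2 + ‖f₄ n x‖ ^ 2)) + M))) atTop (nhds 0) := by
    have t1 := htr1.norm
    have t2 := htr2.norm
    have t3 := htr3.norm
    have t4 := htr4.norm
    have := (((((t3.pow 2).add (t4.pow 2)).add ((hε.mul (t3.const_mul N)).const_mul 2)).add
      (((t1.pow 2).add ((t2.pow 2).const_mul a)).add
        ((hε.mul (t1.const_mul N)).const_mul 2))).const_mul (c₂ - c₁)).add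
      ((hε.mul_const (1 + (c₂ - c₁) + (c₂ - c₁) * |c₀|)).mul (hF.add_const M))
    simpa using this.const_mul (1 - θ)⁻¹
  refine squeeze_zero hE0 (fun n => ?_) hlim
  have h0 : 0 ≤ lam n ^ (-(1 : ℝ) / 2) := Real.rpow_nonneg (hlampos n).le _
  have K := energy_integral_le ha hc (hlampos n)
    (by rw [← Real.rpow_add_one (hlampos n).ne']; norm_num) h0 hθ0 hθr hθ
    (hu n) (hu' n) (hy n) (hy' n) (hf₁ n) (hf₁'c n) (hf₃ n) (hf₃'c n) (hf₂c n) (hf₄c n)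
    (hequ n) (heqy n)
  rw [le_inv_mul_iff₀ (by linarith)]
  refine K.trans (add_le_add ?_ ?_)
  · have b1 := bdry n (u n c₁) (f₁ n c₁)
      ((le_add_of_nonneg_right (norm_nonneg _)).trans (hN n c₁ ⟨le_rfl, hc.le⟩))
    have b2 := bdry n (y n c₂) (f₃ n c₂)
      ((le_add_of_nonneg_left (norm_nonneg _)).trans (hN n c₂ ⟨hc.le, le_rfl⟩))
    have b2' := mul_le_mul_of_nonneg_left (le_of_abs_le b2) hL.le
    have b1' := mul_le_mul_of_nonneg_left (le_of_abs_le b1) hL.le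
    have e : ∀ z : ℂ, ‖(lam n : ℂ) * z‖ ^ 2 = lam n ^ 2 * ‖z‖ ^ 2 := fun z => by
      rw [norm_mul, Complex.norm_real, mul_pow, Real.norm_eq_abs, sq_abs]
    rw [e, e]
    simp only [flux, sub_self, zero_mul, mul_zero, add_zero, zero_add]
    linarith
  · gcongr
    exact hM n
end

section
/- Let real numbers c₁ < c₂ and a real number c₀ with |c₀|·(c₂ − c₁) < 1. Let (λₙ) be a sequence of positive reals with λₙ → ∞. For each n, let uₙ : [c₁,c₂] → ℂ be twice continuously differentiable, yₙ : [c₁,c₂] → ℂ continuous, and gₙ : [c₁,c₂] → ℂ continuous, satisfying λₙ²uₙ(x) + uₙ″(x) − iλₙ·c₀·yₙ(x) = gₙ(x) for all x ∈ [c₁,c₂]. Assume: λₙ·uₙ(c₁) → 0 and uₙ′(c₁) → 0; λₙ²·( ∫_{c₁}^{c₂}|uₙ|² dx − ∫_{c₁}^{c₂}|yₙ|² dx ) → 0; sup_n ∫_{c₁}^{c₂}(λₙ²|uₙ|² + |uₙ′|² + λₙ²|yₙ|²) dx < ∞; and ∫_{c₁}^{c₂}|gₙ|² dx → 0 as n →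 ∞. Then λₙ²·∫_{c₁}^{c₂}|uₙ|² dx → 0, λₙ²·∫_{c₁}^{c₂}|yₙ|² dx → 0, and ∫_{c₁}^{c₂}|uₙ′|² dx → 0 as n → ∞. -/
open Filter

/-!
Write `L = c₂ - c₁`, `f = λ²u + u''` and let `E = λ²|u|² + |u'|²` be the energy density.
Then `E' = 2 Re (f · conj u')`, so `E(x) ≤ E(c₁) + ε ∫|u'|² + ε⁻¹ ∫|f|²` for every `ε > 0`,
and integrating over the coupling region gives (`energy_estimate`)
`λ²∫|u|² + ∫|u'|² ≤ L E(c₁) + L ε ∫|u'|² + L ε⁻¹ ∫|f|²`.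

The equation gives `f = g + iλc₀y`, whence `∫|f|² ≤ (1 + δ) c₀² λ²∫|y|² + o(1)` for every
fixed `δ > 0`. With `ε = 1/L` the terms in `u'` cancel and, by the balance between `u` and `y`,
`λ²∫|u|² ≤ (1 + δ) (c₀L)² λ²∫|u|² + o(1)`; since `|c₀|L < 1`, some `δ` makes the factor on the
right smaller than `1`. So `λ²∫|u|² → 0`, hence `λ²∫|y|² → 0`. With `ε = 1/(2L)` the same
estimate controls `∫|u'|²`.
-/

open MeasureTheory in
/-- Weighted energy estimate for `λ²u + u'' = f` on `[a, b]`, from the Cauchy data at `a`. -/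
lemma energy_estimate {a b l ε : ℝ} (hab : a < b) (hε : 0 < ε) {u u' u'' : ℝ → ℂ}
    (hu : ∀ x ∈ Set.Icc a b, HasDerivAt u (u' x) x)
    (hu' : ∀ x ∈ Set.Icc a b, HasDerivAt u' (u'' x) x)
    (hu'' : ContinuousOn u'' (Set.Icc a b)) :
    l ^ 2 * (∫ x in a..b, ‖u x‖ ^ 2) + ∫ x in a..b, ‖u' x‖ ^ 2 ≤
      (b - a) * (l ^ 2 * ‖u a‖ ^ 2 + ‖u' a‖ ^ 2 + ε * (∫ x in a..b, ‖u' x‖ ^ 2)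
        + ε⁻¹ * ∫ x in a..b, ‖l ^ 2 • u x + u'' x‖ ^ 2) := by
  have cu : ContinuousOn u (Set.Icc a b) := fun x hx => (hu x hx).continuousAt.continuousWithinAt
  have cu' : ContinuousOn u' (Set.Icc a b) :=
    fun x hx => (hu' x hx).continuousAt.continuousWithinAt
  have int {h : ℝ → ℝ} (hh : ContinuousOn h (Set.Icc a b)) : IntervalIntegrable h volume a b :=
    hh.intervalIntegrable_of_Icc hab.le
  set E : ℝ → ℝ := fun x => l ^ 2 * ‖u x‖ ^ 2 + ‖u' x‖ ^ 2 with hE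
  set D : ℝ → ℝ := fun x => 2 * inner ℝ (u' x) (l ^ 2 • u x + u'' x) with hD
  set H : ℝ → ℝ := fun x => ε * ‖u' x‖ ^ 2 + ε⁻¹ * ‖l ^ 2 • u x + u'' x‖ ^ 2 with hH
  have cf : ContinuousOn (fun x => l ^ 2 • u x + u'' x) (Set.Icc a b) :=
    (cu.const_smul (l ^ 2)).add hu''
  have cD : ContinuousOn D (Set.Icc a b) := continuousOn_const.mul (cu'.inner cf)
  have cH : ContinuousOn H (Set.Icc a b) :=
    (continuousOn_const.mul (cu'.norm.pow 2)).add (continuousOn_const.mul (cf.norm.pow 2))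
  have i1 : IntervalIntegrable (fun x => l ^ 2 * ‖u x‖ ^ 2) volume a b :=
    int (continuousOn_const.mul (cu.norm.pow 2))
  have i2 : IntervalIntegrable (fun x => ‖u' x‖ ^ 2) volume a b := int (cu'.norm.pow 2)
  have i3 : IntervalIntegrable (fun x => ε⁻¹ * ‖l ^ 2 • u x + u'' x‖ ^ 2) volume a b :=
    int (continuousOn_const.mul (cf.norm.pow 2))
  have cE : ContinuousOn E (Set.Icc a b) :=
    (continuousOn_const.mul (cu.norm.pow 2)).add (cu'.norm.pow 2)
  have dE : ∀ x ∈ Set.Icc a b, HasDerivAt E (D x) x := by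
    intro x hx
    have h := ((hu x hx).norm_sq.const_mul (l ^ 2)).add (hu' x hx).norm_sq
    have h2 : l ^ 2 * (2 * inner ℝ (u x) (u' x)) + 2 * inner ℝ (u' x) (u'' x) = D x := by
      simp only [hD]
      rw [inner_add_right, real_inner_smul_right, real_inner_comm]
      ring
    rw [h2] at h
    exact h
  have hDH : ∀ x, D x ≤ H x := by
    intro x
    have h1 := real_inner_le_norm (u' x) (l ^ 2 • u x + u'' x)
    have h2 : 0 ≤ ε⁻¹ * (ε * ‖u' x‖ - ‖l ^ 2 • u x + u'' x‖) ^ 2 := by positivity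
    have h3 : ε⁻¹ * (ε * ‖u' x‖ - ‖l ^ 2 • u x + u'' x‖) ^ 2
        = H x - 2 * (‖u' x‖ * ‖l ^ 2 • u x + u'' x‖) := by
      simp only [hH]
      field_simp
      ring
    simp only [hD]
    linarith
  have hH0 : ∀ x, 0 ≤ H x := fun x => by positivity
  have hpt : ∀ x ∈ Set.Icc a b, E x ≤ E a + ∫ t in a..b, H t := by
    intro x hx
    have hsub : Set.Icc a x ⊆ Set.Icc a b := Set.Icc_subset_Icc_right hx.2
    have iD : IntervalIntegrable D volume a x :=
      (cD.mono hsub).intervalIntegrable_of_Icc hx.1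
    have iH : IntervalIntegrable H volume a x :=
      (cH.mono hsub).intervalIntegrable_of_Icc hx.1
    have h1 : ∫ t in a..x, D t = E x - E a :=
      intervalIntegral.integral_eq_sub_of_hasDerivAt
        (fun t ht => dE t (hsub (by rwa [Set.uIcc_of_le hx.1] at ht))) iD
    have h2 : ∫ t in a..x, D t ≤ ∫ t in a..x, H t := intervalIntegral.integral_mono hx.1 iD iH hDH
    have h3 : ∫ t in a..x, H t ≤ ∫ t in a..b, H t :=
      intervalIntegral.integral_mono_interval le_rfl hx.1 hx.2 (Eventually.of_forall hH0) (int cH)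
    linarith
  have hfin := intervalIntegral.integral_mono_on hab.le (int cE) intervalIntegrable_const hpt
  have e1 : ∫ x in a..b, E x
      = l ^ 2 * (∫ x in a..b, ‖u x‖ ^ 2) + ∫ x in a..b, ‖u' x‖ ^ 2 := by
    simp only [hE]
    rw [intervalIntegral.integral_add i1 i2, intervalIntegral.integral_const_mul]
  have e2 : ∫ x in a..b, H x = ε * (∫ x in a..b, ‖u' x‖ ^ 2)
      + ε⁻¹ * ∫ x in a..b, ‖l ^ 2 • u x + u'' x‖ ^ 2 := by
    simp only [hH]
    rw [intervalIntegral.integral_add (i2.const_mul ε) i3, intervalIntegral.integral_const_mul,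
      intervalIntegral.integral_const_mul]
  rw [intervalIntegral.integral_const, e1, e2, smul_eq_mul] at hfin
  simp only [hE] at hfin
  linarith

open MeasureTheory in
/-- Young's inequality, integrated, for a right-hand side `f = g + i l c y`. -/
lemma source_estimate {a b l c δ : ℝ} (hab : a < b) (hδ : 0 < δ) {f y g : ℝ → ℂ}
    (hf : ContinuousOn f (Set.Icc a b)) (hy : ContinuousOn y (Set.Icc a b))
    (hg : ContinuousOn g (Set.Icc a b))
    (h : ∀ x ∈ Set.Icc a b, f x = g x + Complex.I * l * c * y x) :
    ∫ x in a..b, ‖f x‖ ^ 2 ≤ (1 + δ) * c ^ 2 * (l ^ 2 * ∫ x in a..b, ‖y x‖ ^ 2)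
      + (1 + δ⁻¹) * ∫ x in a..b, ‖g x‖ ^ 2 := by
  have int {h : ℝ → ℝ} (hh : ContinuousOn h (Set.Icc a b)) : IntervalIntegrable h volume a b :=
    hh.intervalIntegrable_of_Icc hab.le
  have iy : IntervalIntegrable (fun x => (1 + δ) * c ^ 2 * l ^ 2 * ‖y x‖ ^ 2) volume a b :=
    int (continuousOn_const.mul (hy.norm.pow 2))
  have ig : IntervalIntegrable (fun x => (1 + δ⁻¹) * ‖g x‖ ^ 2) volume a b :=
    int (continuousOn_const.mul (hg.norm.pow 2))
  have hm := intervalIntegral.integral_mono_on hab.le (int (hf.norm.pow 2)) (iy.add ig) (fun x hx => by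
    have h1 : ‖f x‖ ≤ ‖g x‖ + |l| * |c| * ‖y x‖ := by
      rw [h x hx]
      refine (norm_add_le _ _).trans_eq ?_
      simp
    have h2 : ‖f x‖ ^ 2 ≤ (‖g x‖ + |l| * |c| * ‖y x‖) ^ 2 := by gcongr
    have h3 : 0 ≤ δ⁻¹ * (δ * (|l| * |c| * ‖y x‖) - ‖g x‖) ^ 2 := by positivity
    have h4 : δ⁻¹ * (δ * (|l| * |c| * ‖y x‖) - ‖g x‖) ^ 2
        = (1 + δ) * |c| ^ 2 * |l| ^ 2 * ‖y x‖ ^ 2 + (1 + δ⁻¹) * ‖g x‖ ^ 2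
          - (‖g x‖ + |l| * |c| * ‖y x‖) ^ 2 := by
      field_simp
      ring
    rw [sq_abs, sq_abs] at h4
    show ‖f x‖ ^ 2 ≤ (1 + δ) * c ^ 2 * l ^ 2 * ‖y x‖ ^ 2 + (1 + δ⁻¹) * ‖g x‖ ^ 2
    linarith)
  refine hm.trans_eq ?_
  rw [intervalIntegral.integral_add iy ig, intervalIntegral.integral_const_mul,
    intervalIntegral.integral_const_mul]
  ring

/-- Coupling-region estimate in the proof of the `t⁻¹` polynomial
decay (Case 3, equal wave speeds). -/
theorem coupling_region_estimate_case3
    (c₁ c₂ c₀ : ℝ) (hc : c₁ < c₂)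
    (hsmall : |c₀| * (c₂ - c₁) < 1)
    (lam : ℕ → ℝ) (hlampos : ∀ n, 0 < lam n)
    (hlam : Tendsto lam atTop atTop)
    (u u' u'' y g : ℕ → ℝ → ℂ)
    (hu : ∀ n, ∀ x ∈ Set.Icc c₁ c₂, HasDerivAt (u n) (u' n x) x)
    (hu' : ∀ n, ∀ x ∈ Set.Icc c₁ c₂, HasDerivAt (u' n) (u'' n x) x)
    (hu''c : ∀ n, ContinuousOn (u'' n) (Set.Icc c₁ c₂))
    (hyc : ∀ n, ContinuousOn (y n) (Set.Icc c₁ c₂))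
    (hgc : ∀ n, ContinuousOn (g n) (Set.Icc c₁ c₂))
    (heq : ∀ n, ∀ x ∈ Set.Icc c₁ c₂,
      ((lam n : ℂ)) ^ 2 * u n x + u'' n x - Complex.I * lam n * c₀ * y n x
        = g n x)
    (htr1 : Tendsto (fun n => (lam n : ℂ) * u n c₁) atTop (nhds 0))
    (htr2 : Tendsto (fun n => u' n c₁) atTop (nhds 0))
    (hbal : Tendsto (fun n => (lam n) ^ 2 *
        ((∫ x in c₁..c₂, ‖u n x‖ ^ 2) - ∫ x in c₁..c₂, ‖y n x‖ ^ 2))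
      atTop (nhds 0))
    (hbdd : ∃ M : ℝ, ∀ n,
      (∫ x in c₁..c₂, ((lam n) ^ 2 * ‖u n x‖ ^ 2 + ‖u' n x‖ ^ 2
        + (lam n) ^ 2 * ‖y n x‖ ^ 2)) ≤ M)
    (hg : Tendsto (fun n => ∫ x in c₁..c₂, ‖g n x‖ ^ 2) atTop (nhds 0)) :
    Tendsto (fun n => (lam n) ^ 2 * ∫ x in c₁..c₂, ‖u n x‖ ^ 2) atTop (nhds 0)
      ∧ Tendsto (fun n => (lam n) ^ 2 * ∫ x in c₁..c₂, ‖y n x‖ ^ 2)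
          atTop (nhds 0)
      ∧ Tendsto (fun n => ∫ x in c₁..c₂, ‖u' n x‖ ^ 2) atTop (nhds 0) := by
  set L := c₂ - c₁ with hLdef
  have hL : 0 < L := sub_pos.2 hc
  obtain ⟨δ, hδ, hθ⟩ : ∃ δ : ℝ, 0 < δ ∧ L ^ 2 * ((1 + δ) * c₀ ^ 2) < 1 := by
    have h1 : (c₀ * L) ^ 2 < 1 := by
      rw [sq_lt_one_iff_abs_lt_one, abs_mul, abs_of_pos hL]
      exact hsmall
    have h0 : 0 ≤ (c₀ * L) ^ 2 := sq_nonneg _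
    refine ⟨1 - (c₀ * L) ^ 2, by linarith, ?_⟩
    -- With `s = (c₀L)² < 1` and `δ = 1 - s` the claim reads `(2 - s) s < 1`.
    nlinarith [sq_pos_of_pos (sub_pos.2 h1)]
  set θ := L ^ 2 * ((1 + δ) * c₀ ^ 2) with hθdef
  set U : ℕ → ℝ := fun n => (lam n) ^ 2 * ∫ x in c₁..c₂, ‖u n x‖ ^ 2 with hU
  set Y : ℕ → ℝ := fun n => (lam n) ^ 2 * ∫ x in c₁..c₂, ‖y n x‖ ^ 2 with hY
  set V : ℕ → ℝ := fun n => ∫ x in c₁..c₂, ‖u' n x‖ ^ 2 with hV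
  set G : ℕ → ℝ := fun n => ∫ x in c₁..c₂, ‖g n x‖ ^ 2 with hG
  set E : ℕ → ℝ := fun n => (lam n) ^ 2 * ‖u n c₁‖ ^ 2 + ‖u' n c₁‖ ^ 2 with hE
  have hU0 : ∀ n, 0 ≤ U n := fun n =>
    mul_nonneg (sq_nonneg _) (intervalIntegral.integral_nonneg hc.le fun x _ => by positivity)
  have hV0 : ∀ n, 0 ≤ V n := fun n =>
    intervalIntegral.integral_nonneg hc.le fun x _ => by positivity
  have hUY : Tendsto (fun n => U n - Y n) atTop (nhds 0) := by
    refine hbal.congr fun n => ?_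
    simp only [hU, hY]
    ring
  have hE0 : Tendsto E atTop (nhds 0) := by
    have h := (htr1.norm.pow 2).add (htr2.norm.pow 2)
    simp only [norm_zero, ne_eq, OfNat.ofNat_ne_zero, not_false_eq_true, zero_pow, add_zero] at h
    refine h.congr fun n => ?_
    simp [hE, mul_pow]
  have key : ∀ ε : ℝ, 0 < ε → ∀ n, U n + V n ≤ L * (E n + ε * V n
      + ε⁻¹ * ((1 + δ) * c₀ ^ 2 * Y n + (1 + δ⁻¹) * G n)) := by
    intro ε hε n
    have cu : ContinuousOn (u n) (Set.Icc c₁ c₂) :=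
      fun x hx => (hu n x hx).continuousAt.continuousWithinAt
    have h1 := energy_estimate (l := lam n) hc hε (hu n) (hu' n) (hu''c n)
    have h2 := source_estimate (l := lam n) (c := c₀) hc hδ
      (f := fun x => lam n ^ 2 • u n x + u'' n x)
      ((cu.const_smul (lam n ^ 2)).add (hu''c n)) (hyc n) (hgc n) (fun x hx => by
        rw [← heq n x hx, Complex.real_smul]
        push_cast
        ring)
    refine h1.trans ?_
    simp only [hE, hV, hY, hG, hLdef]
    gcongr
  have hU_lim : Tendsto U atTop (nhds 0) := by
    have hb : Tendsto (fun n => (1 - θ)⁻¹ *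
        (L * E n - θ * (U n - Y n) + L ^ 2 * (1 + δ⁻¹) * G n)) atTop (nhds 0) := by
      simpa using (((hE0.const_mul L).sub (hUY.const_mul θ)).add
        (hg.const_mul (L ^ 2 * (1 + δ⁻¹)))).const_mul (1 - θ)⁻¹
    refine squeeze_zero hU0 (fun n => ?_) hb
    have h := key L⁻¹ (inv_pos.2 hL) n
    have e : L * (E n + L⁻¹ * V n + L⁻¹⁻¹ * ((1 + δ) * c₀ ^ 2 * Y n + (1 + δ⁻¹) * G n))
        = L * E n + V n + θ * Y n + L ^ 2 * (1 + δ⁻¹) * G n := by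
      rw [hθdef]
      field_simp
      ring
    rw [e] at h
    rw [inv_mul_eq_div, le_div_iff₀ (sub_pos.2 hθ)]
    linarith
  have hY_lim : Tendsto Y atTop (nhds 0) := by
    simpa using hU_lim.sub hUY
  refine ⟨hU_lim, hY_lim, ?_⟩
  have hb : Tendsto (fun n => 2 * (L * E n) + 4 * θ * Y n + 4 * (L ^ 2 * (1 + δ⁻¹)) * G n)
      atTop (nhds 0) := by
    simpa using (((hE0.const_mul L).const_mul 2).add (hY_lim.const_mul (4 * θ))).add
      (hg.const_mul (4 * (L ^ 2 * (1 + δ⁻¹))))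
  refine squeeze_zero hV0 (fun n => ?_) hb
  have h := key (2 * L)⁻¹ (by positivity) n
  have e : L * (E n + (2 * L)⁻¹ * V n
        + (2 * L)⁻¹⁻¹ * ((1 + δ) * c₀ ^ 2 * Y n + (1 + δ⁻¹) * G n))
      = L * E n + V n / 2 + 2 * θ * Y n + 2 * (L ^ 2 * (1 + δ⁻¹)) * G n := by
    rw [hθdef]
    field_simp
    ring
  rw [e] at h
  linarith [hU0 n]
end

section
/- Let L > 0, real numbers 0 < b₁ < b₂ < c₁ < c₂ < L, b₀ > 0, and a real number c₀ ≠ 0. Let (λₙ) be a sequence of positive reals with λₙ → ∞. For each n, let uₙ, vₙ, yₙ : [0,L] → ℂ be continuously differentiable with uₙ(0) = uₙ(L) = yₙ(0) = yₙ(L) = 0; let yₙ be twice differentiable on (0,c₁) ∪ (c₁,c₂) ∪ (c₂,L); let wₙ : [0,L] → ℂ be continuous, continuously differentiable on the complement of {b₁, b₂, c₁, c₂} in (0,L), with wₙ(x) = uₙ′(x) + b₀·vₙ′(x) for x ∈ (b₁,b₂) and wₙ(x) = uₙ′(x) for x ∈ (0,L) outside [b₁,b₂]; and let gₙ, hₙ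 : [0,L] → ℂ be continuous. Assume that on (0,L) ∖ {b₁,b₂,c₁,c₂}: λₙ²uₙ + wₙ′ − iλₙ·c(x)·yₙ = gₙ and λₙ²yₙ + yₙ″ + iλₙ·c(x)·uₙ = hₙ, where c(x) = c₀ for x ∈ (c₁,c₂) and c(x) = 0 otherwise. Assume further: λₙ²·∫_{b₁}^{b₂}|vₙ′|² dx → 0; sup_n ∫_0^L(λₙ²|uₙ|² + |uₙ′|² + λₙ²|yₙ|² + |yₙ′|²) dx < ∞; and ∫_0^L(|gₙ|² + |hₙ|²) dx → 0 as n → ∞. Then λₙ²·( ∫_{c₁}^{c₂}|uₙ|² dx − ∫_{c₁}^{c₂}|yₙ|² dx ) → 0 as n → ∞. -/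
/-!
The function `Im (w * conj y + y' * conj u)` is continuous on `[0, L]`, vanishes at both ends, and
is differentiable off `{b₁, b₂, c₁, c₂}`. After insertion of the two equations the terms
`λ² (u * conj y + y * conj u)` and `u' * conj y' + y' * conj u'` are real, so its derivative is
`Im (g * conj y + h * conj u)`, plus `λ c₀ (|y|² - |u|²)` on `(c₁, c₂)`, plus
`b₀ Im (v' * conj y')` on `(b₁, b₂)`. This derivative has integral zero over `[0, L]`, which gives
`integral_identity`. After multiplication by `λ`, Young's inequality with a free weight `t` bounds
the first and last terms by `t` times the energy plus `t⁻¹` times quantities that tend to zero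
(`balance_bound`); the energy is bounded and `t` is arbitrary.
-/

open Filter

/-- Integration over the larger interval of a function cut off to an inner open interval. -/
lemma integral_indicator_Ioo {L a b : ℝ} (ha : 0 ≤ a) (hab : a ≤ b) (hbL : b ≤ L) (f : ℝ → ℝ) :
    ∫ x in (0 : ℝ)..L, (Set.Ioo a b).indicator f x = ∫ x in a..b, f x := by
  rw [intervalIntegral.integral_of_le (by linarith), intervalIntegral.integral_of_le hab,
    MeasureTheory.setIntegral_indicator measurableSet_Ioo,
    Set.inter_eq_self_of_subset_right, MeasureTheory.integral_Ioc_eq_integral_Ioo]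
  exact fun x hx => ⟨ha.trans_lt hx.1, hx.2.le.trans hbL⟩

lemma intervalIntegrable_indicator_Ioo {L : ℝ} (hL : 0 ≤ L) (a b : ℝ) {f : ℝ → ℝ}
    (hf : ContinuousOn f (Set.Icc 0 L)) :
    IntervalIntegrable ((Set.Ioo a b).indicator f) MeasureTheory.volume 0 L := by
  have h1 := hf.intervalIntegrable_of_Icc (μ := MeasureTheory.volume) hL
  rw [intervalIntegrable_iff] at h1 ⊢
  exact h1.indicator measurableSet_Ioo

/-- The imaginary part of the summed multiplier identity, before multiplication by `lam`. -/
lemma integral_identity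
    {L b₁ b₂ c₁ c₂ b₀ c₀ lam : ℝ}
    (h0b : 0 < b₁) (hb : b₁ < b₂) (hbc : b₂ < c₁) (hc : c₁ < c₂) (hcL : c₂ < L)
    {u u' v' y y' y'' w w' g h : ℝ → ℂ}
    (hu : ∀ x ∈ Set.Icc 0 L, HasDerivAt u (u' x) x)
    (hv'c : ContinuousOn v' (Set.Icc 0 L))
    (hy : ∀ x ∈ Set.Icc 0 L, HasDerivAt y (y' x) x)
    (hy'c : ContinuousOn y' (Set.Icc 0 L))
    (hbcu : u 0 = 0 ∧ u L = 0 ∧ y 0 = 0 ∧ y L = 0)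
    (hy'' : ∀ x ∈ Set.Ioo 0 c₁ ∪ Set.Ioo c₁ c₂ ∪ Set.Ioo c₂ L, HasDerivAt y' (y'' x) x)
    (hwc : ContinuousOn w (Set.Icc 0 L))
    (hw : ∀ x ∈ Set.Ioo 0 L \ ({b₁, b₂, c₁, c₂} : Set ℝ), HasDerivAt w (w' x) x)
    (hwmid : ∀ x ∈ Set.Ioo b₁ b₂, w x = u' x + (b₀ : ℂ) * v' x)
    (hwout : ∀ x ∈ Set.Ioo 0 L \ Set.Icc b₁ b₂, w x = u' x)
    (hgc : ContinuousOn g (Set.Icc 0 L))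
    (hhc : ContinuousOn h (Set.Icc 0 L))
    (hequ : ∀ x ∈ Set.Ioo 0 L \ ({b₁, b₂, c₁, c₂} : Set ℝ),
      (lam : ℂ) ^ 2 * u x + w' x
          - Complex.I * lam * (if c₁ < x ∧ x < c₂ then (c₀ : ℂ) else 0) * y x = g x)
    (heqy : ∀ x ∈ Set.Ioo 0 L \ ({b₁, b₂, c₁, c₂} : Set ℝ),
      (lam : ℂ) ^ 2 * y x + y'' x
          + Complex.I * lam * (if c₁ < x ∧ x < c₂ then (c₀ : ℂ) else 0) * u x = h x) :
    ∫ x in (0 : ℝ)..L, ((g x * star (y x) + h x * star (u x)).im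
      + (Set.Ioo c₁ c₂).indicator (fun x => lam * c₀ * (‖y x‖ ^ 2 - ‖u x‖ ^ 2)) x
      + (Set.Ioo b₁ b₂).indicator (fun x => b₀ * (v' x * star (y' x)).im) x) = 0 := by
  have hL : 0 ≤ L := by linarith
  have huc : ContinuousOn u (Set.Icc 0 L) := fun x hx => (hu x hx).continuousAt.continuousWithinAt
  have hyc : ContinuousOn y (Set.Icc 0 L) := fun x hx => (hy x hx).continuousAt.continuousWithinAt
  have hΦc : ContinuousOn (fun x => (w x * star (y x) + y' x * star (u x)).im) (Set.Icc 0 L) :=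
    Complex.continuous_im.comp_continuousOn ((hwc.mul hyc.star).add (hy'c.mul huc.star))
  have hint : IntervalIntegrable (fun x => (g x * star (y x) + h x * star (u x)).im
      + (Set.Ioo c₁ c₂).indicator (fun x => lam * c₀ * (‖y x‖ ^ 2 - ‖u x‖ ^ 2)) x
      + (Set.Ioo b₁ b₂).indicator (fun x => b₀ * (v' x * star (y' x)).im) x)
      MeasureTheory.volume 0 L := by
    refine (IntervalIntegrable.add ?_ ?_).add ?_
    · exact (Complex.continuous_im.comp_continuousOn
        ((hgc.mul hyc.star).add (hhc.mul huc.star))).intervalIntegrable_of_Icc hL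
    · exact intervalIntegrable_indicator_Ioo hL _ _
        (continuousOn_const.mul ((hyc.norm.pow 2).sub (huc.norm.pow 2)))
    · exact intervalIntegrable_indicator_Ioo hL _ _ (continuousOn_const.mul
        (Complex.continuous_im.comp_continuousOn (hv'c.mul hy'c.star)))
  have key := MeasureTheory.integral_eq_of_hasDerivAt_off_countable_of_le
    (fun x => (w x * star (y x) + y' x * star (u x)).im) _ hL
    (Set.toFinite ({b₁, b₂, c₁, c₂} : Set ℝ)).countable hΦc ?_ hint
  · rw [key]
    simp [hbcu]
  · intro x hx
    have hxI : x ∈ Set.Icc 0 L := Set.Ioo_subset_Icc_self hx.1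
    obtain ⟨⟨hx0, hxL⟩, hxs⟩ := id hx
    simp only [Set.mem_insert_iff, Set.mem_singleton_iff, not_or] at hxs
    obtain ⟨hxb₁, hxb₂, hxc₁, hxc₂⟩ := hxs
    have hy2 : HasDerivAt y' (y'' x) x := by
      apply hy''
      rcases lt_or_gt_of_ne hxc₁ with h1 | h1
      · exact Or.inl (Or.inl ⟨hx0, h1⟩)
      · rcases lt_or_gt_of_ne hxc₂ with h2 | h2
        · exact Or.inl (Or.inr ⟨h1, h2⟩)
        · exact Or.inr ⟨h2, hxL⟩
    have hd := ((hw x hx).mul (hy x hxI).star).add (hy2.mul (hu x hxI).star)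
    have hd' := Complex.imCLM.hasFDerivAt.comp_hasDerivAt x hd
    refine hd'.congr_deriv ?_
    have e1 : w' x = g x - (lam : ℂ) ^ 2 * u x
        + Complex.I * lam * (if c₁ < x ∧ x < c₂ then (c₀ : ℂ) else 0) * y x := by
      rw [← hequ x hx]; ring
    have e2 : y'' x = h x - (lam : ℂ) ^ 2 * y x
        - Complex.I * lam * (if c₁ < x ∧ x < c₂ then (c₀ : ℂ) else 0) * u x := by
      rw [← heqy x hx]; ring
    have e3 : w x = u' x + (if b₁ < x ∧ x < b₂ then (b₀ : ℂ) else 0) * v' x := by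
      split_ifs with h1
      · exact hwmid x h1
      · rw [hwout x ⟨hx.1, fun h2 => h1
          ⟨lt_of_le_of_ne h2.1 (Ne.symm hxb₁), lt_of_le_of_ne h2.2 hxb₂⟩⟩]
        ring
    rw [e1, e2, e3]
    simp only [Set.indicator_apply, Set.mem_Ioo, Complex.imCLM_apply, Complex.sq_norm,
      Complex.normSq_apply, pow_two (lam : ℂ)]
    split_ifs <;> simp <;> ring

/-- The balance defect is controlled, for every weight `t > 0`, by `t` times the energy plus `t⁻¹`
times the forcing and damping terms. -/
lemma balance_bound
    {L b₁ b₂ c₁ c₂ b₀ c₀ lam t : ℝ} (ht : 0 < t) (hlam : 0 < lam) (hb₀ : 0 < b₀)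
    (h0b : 0 < b₁) (hb : b₁ < b₂) (hbc : b₂ < c₁) (hc : c₁ < c₂) (hcL : c₂ < L)
    {u u' v' y y' g h : ℝ → ℂ}
    (huc : ContinuousOn u (Set.Icc 0 L))
    (hu'c : ContinuousOn u' (Set.Icc 0 L))
    (hv'c : ContinuousOn v' (Set.Icc 0 L))
    (hyc : ContinuousOn y (Set.Icc 0 L))
    (hy'c : ContinuousOn y' (Set.Icc 0 L))
    (hgc : ContinuousOn g (Set.Icc 0 L))
    (hhc : ContinuousOn h (Set.Icc 0 L))
    (hid : ∫ x in (0 : ℝ)..L, ((g x * star (y x) + h x * star (u x)).im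
      + (Set.Ioo c₁ c₂).indicator (fun x => lam * c₀ * (‖y x‖ ^ 2 - ‖u x‖ ^ 2)) x
      + (Set.Ioo b₁ b₂).indicator (fun x => b₀ * (v' x * star (y' x)).im) x) = 0) :
    |c₀ * (lam ^ 2 * ((∫ x in c₁..c₂, ‖u x‖ ^ 2) - ∫ x in c₁..c₂, ‖y x‖ ^ 2))| ≤
      t * (∫ x in (0 : ℝ)..L, (lam ^ 2 * ‖u x‖ ^ 2 + ‖u' x‖ ^ 2
        + lam ^ 2 * ‖y x‖ ^ 2 + ‖y' x‖ ^ 2))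
      + t⁻¹ * ((∫ x in (0 : ℝ)..L, (‖g x‖ ^ 2 + ‖h x‖ ^ 2))
        + b₀ ^ 2 * (lam ^ 2 * ∫ x in b₁..b₂, ‖v' x‖ ^ 2)) := by
  have hL : 0 ≤ L := by linarith
  have hP : IntervalIntegrable (fun x => (g x * star (y x) + h x * star (u x)).im)
      MeasureTheory.volume 0 L :=
    (Complex.continuous_im.comp_continuousOn
      ((hgc.mul hyc.star).add (hhc.mul huc.star))).intervalIntegrable_of_Icc hL
  have hQ := intervalIntegrable_indicator_Ioo hL c₁ c₂ (f := fun x =>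
    lam * c₀ * (‖y x‖ ^ 2 - ‖u x‖ ^ 2))
    (continuousOn_const.mul ((hyc.norm.pow 2).sub (huc.norm.pow 2)))
  have hR := intervalIntegrable_indicator_Ioo hL b₁ b₂ (f := fun x => b₀ * (v' x * star (y' x)).im)
    (continuousOn_const.mul (Complex.continuous_im.comp_continuousOn (hv'c.mul hy'c.star)))
  have hV := intervalIntegrable_indicator_Ioo hL b₁ b₂ (f := fun x => ‖v' x‖ ^ 2) (hv'c.norm.pow 2)
  have hE : IntervalIntegrable (fun x => lam ^ 2 * ‖u x‖ ^ 2 + ‖u' x‖ ^ 2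
      + lam ^ 2 * ‖y x‖ ^ 2 + ‖y' x‖ ^ 2) MeasureTheory.volume 0 L :=
    ContinuousOn.intervalIntegrable_of_Icc hL
      ((((continuousOn_const.mul (huc.norm.pow 2)).add (hu'c.norm.pow 2)).add
        (continuousOn_const.mul (hyc.norm.pow 2))).add (hy'c.norm.pow 2))
  have hG : IntervalIntegrable (fun x => ‖g x‖ ^ 2 + ‖h x‖ ^ 2) MeasureTheory.volume 0 L :=
    ContinuousOn.intervalIntegrable_of_Icc hL ((hgc.norm.pow 2).add (hhc.norm.pow 2))
  have hsub : Set.Icc c₁ c₂ ⊆ Set.Icc 0 L := Set.Icc_subset_Icc (by linarith) hcL.le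
  have hcu : IntervalIntegrable (fun x => ‖u x‖ ^ 2) MeasureTheory.volume c₁ c₂ :=
    ((huc.mono hsub).norm.pow 2).intervalIntegrable_of_Icc hc.le
  have hcy : IntervalIntegrable (fun x => ‖y x‖ ^ 2) MeasureTheory.volume c₁ c₂ :=
    ((hyc.mono hsub).norm.pow 2).intervalIntegrable_of_Icc hc.le
  rw [intervalIntegral.integral_add (hP.add hQ) hR, intervalIntegral.integral_add hP hQ,
    integral_indicator_Ioo (by linarith) hc.le hcL.le, intervalIntegral.integral_const_mul,
    intervalIntegral.integral_sub hcy hcu] at hid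
  have hdef : c₀ * (lam ^ 2 * ((∫ x in c₁..c₂, ‖u x‖ ^ 2) - ∫ x in c₁..c₂, ‖y x‖ ^ 2)) =
      ∫ x in (0 : ℝ)..L, lam * ((g x * star (y x) + h x * star (u x)).im
        + (Set.Ioo b₁ b₂).indicator (fun x => b₀ * (v' x * star (y' x)).im) x) := by
    rw [intervalIntegral.integral_const_mul, intervalIntegral.integral_add hP hR]
    linear_combination (-lam) * hid
  have hrhs : t * (∫ x in (0 : ℝ)..L, (lam ^ 2 * ‖u x‖ ^ 2 + ‖u' x‖ ^ 2
        + lam ^ 2 * ‖y x‖ ^ 2 + ‖y' x‖ ^ 2))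
      + t⁻¹ * ((∫ x in (0 : ℝ)..L, (‖g x‖ ^ 2 + ‖h x‖ ^ 2))
        + b₀ ^ 2 * (lam ^ 2 * ∫ x in b₁..b₂, ‖v' x‖ ^ 2)) =
      ∫ x in (0 : ℝ)..L, (t * (lam ^ 2 * ‖u x‖ ^ 2 + ‖u' x‖ ^ 2
        + lam ^ 2 * ‖y x‖ ^ 2 + ‖y' x‖ ^ 2)
      + t⁻¹ * ((‖g x‖ ^ 2 + ‖h x‖ ^ 2)
        + b₀ ^ 2 * (lam ^ 2 * (Set.Ioo b₁ b₂).indicator (fun x => ‖v' x‖ ^ 2) x))) := by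
    have hV' := (hV.const_mul (lam ^ 2)).const_mul (b₀ ^ 2)
    rw [intervalIntegral.integral_add (hE.const_mul t) ((hG.add hV').const_mul t⁻¹),
      intervalIntegral.integral_const_mul, intervalIntegral.integral_const_mul,
      intervalIntegral.integral_add hG hV', intervalIntegral.integral_const_mul,
      intervalIntegral.integral_const_mul,
      integral_indicator_Ioo h0b.le hb.le (by linarith)]
  rw [hdef, hrhs, ← Real.norm_eq_abs]
  refine intervalIntegral.norm_integral_le_of_norm_le hL (MeasureTheory.ae_of_all _ fun x _ => ?_)
    ((hE.const_mul t).add ((hG.add ((hV.const_mul (lam ^ 2)).const_mul (b₀ ^ 2))).const_mul t⁻¹))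
  have young : ∀ p q : ℝ, p * q ≤ t * p ^ 2 + t⁻¹ * q ^ 2 := by
    intro p q
    have h1 : 0 ≤ t⁻¹ * ((t * p - q) ^ 2 + (t * p) ^ 2 + q ^ 2) := by positivity
    have h2 : t⁻¹ * ((t * p - q) ^ 2 + (t * p) ^ 2 + q ^ 2) =
        2 * (t * p ^ 2 + t⁻¹ * q ^ 2 - p * q) := by
      field_simp
      ring
    linarith
  have him : ∀ p q : ℂ, |(p * star q).im| ≤ ‖q‖ * ‖p‖ := by
    intro p q
    refine (Complex.abs_im_le_norm _).trans_eq ?_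
    rw [norm_mul, norm_star, mul_comm]
  have h1 := young (lam * ‖y x‖) ‖g x‖
  have h2 := young (lam * ‖u x‖) ‖h x‖
  have h3 := young ‖y' x‖ (b₀ * lam * ‖v' x‖)
  have h4 := mul_le_mul_of_nonneg_left (him (g x) (y x)) hlam.le
  have h5 := mul_le_mul_of_nonneg_left (him (h x) (u x)) hlam.le
  have h6 := mul_le_mul_of_nonneg_left (him (v' x) (y' x)) (mul_pos hlam hb₀).le
  have h7 : 0 ≤ t * ‖u' x‖ ^ 2 := by positivity
  have h8 : 0 ≤ t * ‖y' x‖ ^ 2 := by positivity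
  have hB : |lam * (Set.Ioo b₁ b₂).indicator (fun x => b₀ * (v' x * star (y' x)).im) x| ≤
      t * ‖y' x‖ ^ 2
        + t⁻¹ * (b₀ ^ 2 * (lam ^ 2 * (Set.Ioo b₁ b₂).indicator (fun x => ‖v' x‖ ^ 2) x)) := by
    simp only [Set.indicator_apply]
    split_ifs
    · rw [abs_mul, abs_mul, abs_of_pos hlam, abs_of_pos hb₀]
      linarith
    · simpa using h8
  have hA : |lam * (g x * star (y x) + h x * star (u x)).im| ≤
      lam * |(g x * star (y x)).im| + lam * |(h x * star (u x)).im| := by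
    rw [abs_mul, abs_of_pos hlam, Complex.add_im, ← mul_add]
    exact mul_le_mul_of_nonneg_left (abs_add_le _ _) hlam.le
  rw [Real.norm_eq_abs, mul_add lam]
  refine (abs_add_le _ _).trans ?_
  linarith

/-- A sequence bounded by `t * M + t⁻¹ * B n` for every `t > 0`, with `B` tending to zero, tends to
zero. -/
lemma tendsto_zero_of_weighted_bound {a B : ℕ → ℝ} {M : ℝ} (hB : Tendsto B atTop (nhds 0))
    (ha : ∀ t : ℝ, 0 < t → ∀ n, |a n| ≤ t * M + t⁻¹ * B n) :
    Tendsto a atTop (nhds 0) := by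
  rw [Metric.tendsto_atTop]
  intro ε hε
  -- With this weight, `t * M < ε / 2`.
  set t : ℝ := ε / (2 * (|M| + 1)) with ht_def
  have ht : 0 < t := by positivity
  have htM : t * M < ε / 2 := by
    have h1 : t * (|M| + 1) = ε / 2 := by
      rw [ht_def]; field_simp
    have h2 : t * M ≤ t * |M| := mul_le_mul_of_nonneg_left (le_abs_self M) ht.le
    linarith
  have hB' : Tendsto (fun n => t⁻¹ * B n) atTop (nhds 0) := by
    simpa using hB.const_mul t⁻¹
  obtain ⟨N, hN⟩ := eventually_atTop.1 (hB'.eventually (gt_mem_nhds (half_pos hε)))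
  refine ⟨N, fun n hn => ?_⟩
  rw [Real.dist_eq, sub_zero]
  have := ha t ht n
  have := hN n hn
  linarith



/-- Asymptotic L²-balance identity on the coupling region in the
proof of the `t⁻¹` polynomial decay (Case 3 of the one-dimensional system). -/
theorem asymptotic_l2_balance_case3
    (L b₁ b₂ c₁ c₂ b₀ c₀ : ℝ) (hL : 0 < L)
    (h0b : 0 < b₁) (hb : b₁ < b₂) (hbc : b₂ < c₁) (hc : c₁ < c₂) (hcL : c₂ < L)
    (hb₀ : 0 < b₀) (hc₀ : c₀ ≠ 0)
    (lam : ℕ → ℝ) (hlampos : ∀ n, 0 < lam n)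
    (hlam : Tendsto lam atTop atTop)
    (u u' v v' y y' y'' w w' g h : ℕ → ℝ → ℂ)
    (hu : ∀ n, ∀ x ∈ Set.Icc 0 L, HasDerivAt (u n) (u' n x) x)
    (hu'c : ∀ n, ContinuousOn (u' n) (Set.Icc 0 L))
    (hv : ∀ n, ∀ x ∈ Set.Icc 0 L, HasDerivAt (v n) (v' n x) x)
    (hv'c : ∀ n, ContinuousOn (v' n) (Set.Icc 0 L))
    (hy : ∀ n, ∀ x ∈ Set.Icc 0 L, HasDerivAt (y n) (y' n x) x)
    (hy'c : ∀ n, ContinuousOn (y' n) (Set.Icc 0 L))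
    (hbcu : ∀ n, u n 0 = 0 ∧ u n L = 0 ∧ y n 0 = 0 ∧ y n L = 0)
    (hy'' : ∀ n, ∀ x ∈ Set.Ioo 0 c₁ ∪ Set.Ioo c₁ c₂ ∪ Set.Ioo c₂ L,
      HasDerivAt (y' n) (y'' n x) x)
    (hwc : ∀ n, ContinuousOn (w n) (Set.Icc 0 L))
    (hw : ∀ n, ∀ x ∈ Set.Ioo 0 L \ ({b₁, b₂, c₁, c₂} : Set ℝ),
      HasDerivAt (w n) (w' n x) x)
    (hw'c : ∀ n, ContinuousOn (w' n)
      (Set.Ioo 0 L \ ({b₁, b₂, c₁, c₂} : Set ℝ)))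
    (hwmid : ∀ n, ∀ x ∈ Set.Ioo b₁ b₂, w n x = u' n x + (b₀ : ℂ) * v' n x)
    (hwout : ∀ n, ∀ x ∈ Set.Ioo 0 L \ Set.Icc b₁ b₂, w n x = u' n x)
    (hgc : ∀ n, ContinuousOn (g n) (Set.Icc 0 L))
    (hhc : ∀ n, ContinuousOn (h n) (Set.Icc 0 L))
    (hequ : ∀ n, ∀ x ∈ Set.Ioo 0 L \ ({b₁, b₂, c₁, c₂} : Set ℝ),
      ((lam n : ℂ)) ^ 2 * u n x + w' n x
          - Complex.I * lam n * (if c₁ < x ∧ x < c₂ then (c₀ : ℂ) else 0) * y n x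
        = g n x)
    (heqy : ∀ n, ∀ x ∈ Set.Ioo 0 L \ ({b₁, b₂, c₁, c₂} : Set ℝ),
      ((lam n : ℂ)) ^ 2 * y n x + y'' n x
          + Complex.I * lam n * (if c₁ < x ∧ x < c₂ then (c₀ : ℂ) else 0) * u n x
        = h n x)
    (hdamp : Tendsto (fun n => (lam n) ^ 2 * ∫ x in b₁..b₂, ‖v' n x‖ ^ 2)
      atTop (nhds 0))
    (hbdd : ∃ M : ℝ, ∀ n,
      (∫ x in (0:ℝ)..L, ((lam n) ^ 2 * ‖u n x‖ ^ 2 + ‖u' n x‖ ^ 2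
        + (lam n) ^ 2 * ‖y n x‖ ^ 2 + ‖y' n x‖ ^ 2)) ≤ M)
    (hgh : Tendsto (fun n => ∫ x in (0:ℝ)..L, (‖g n x‖ ^ 2 + ‖h n x‖ ^ 2))
      atTop (nhds 0)) :
    Tendsto (fun n => (lam n) ^ 2 *
        ((∫ x in c₁..c₂, ‖u n x‖ ^ 2) - ∫ x in c₁..c₂, ‖y n x‖ ^ 2))
      atTop (nhds 0) := by
  obtain ⟨M, hM⟩ := hbdd
  have hB : Tendsto (fun n => (∫ x in (0 : ℝ)..L, (‖g n x‖ ^ 2 + ‖h n x‖ ^ 2))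
      + b₀ ^ 2 * ((lam n) ^ 2 * ∫ x in b₁..b₂, ‖v' n x‖ ^ 2)) atTop (nhds 0) := by
    simpa using hgh.add (hdamp.const_mul (b₀ ^ 2))
  have hlim : Tendsto (fun n => c₀ * ((lam n) ^ 2 *
      ((∫ x in c₁..c₂, ‖u n x‖ ^ 2) - ∫ x in c₁..c₂, ‖y n x‖ ^ 2))) atTop (nhds 0) := by
    refine tendsto_zero_of_weighted_bound (M := M) hB fun t ht n => ?_
    have hid := integral_identity h0b hb hbc hc hcL (hu n) (hv'c n) (hy n) (hy'c n) (hbcu n)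
      (hy'' n) (hwc n) (hw n) (hwmid n) (hwout n) (hgc n) (hhc n) (hequ n) (heqy n)
    refine (balance_bound ht (hlampos n) hb₀ h0b hb hbc hc hcL
      (fun x hx => (hu n x hx).continuousAt.continuousWithinAt) (hu'c n) (hv'c n)
      (fun x hx => (hy n x hx).continuousAt.continuousWithinAt) (hy'c n) (hgc n) (hhc n)
      hid).trans ?_
    have := mul_le_mul_of_nonneg_left (hM n) ht.le
    linarith
  simpa [hc₀] using hlim.const_mul c₀⁻¹
end

section
/- Let a > 0, λ ∈ ℝ, and real numbers α < β. Let u : [α,β] → ℂ be twice continuously differentiable and g : [α,β] → ℂ continuous, with λ²u(x) + a·u″(x) = g(x) for all x ∈ [α,β]. Then (β − α)·( λ²|u(β)|² + a|u′(β)|² ) = ∫_α^β ( λ²|u(x)|² + a|u′(x)|² ) dx + 2·Re( ∫_α^β (x − α)·g(x)·conj(u′(x)) dx ). -/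
/-! The energy `E x = λ²‖u x‖² + a‖u' x‖²` satisfies `E' = 2 Re ((λ²u + a u'') conj u') = 2 Re (g conj u')`,
so `(x - α) E x` has derivative `E x + 2 Re ((x - α) g conj u')`. Integrating over `[α, β]` with the
fundamental theorem of calculus gives the identity, since the boundary term at `α` vanishes. -/

/-- One-dimensional Rellich–Pohozaev-type identity for
`λ²u + a·u″ = g` on `[α,β]`. -/
theorem rellich_pohozaev_identity
    (a lam α β : ℝ) (ha : 0 < a) (hαβ : α < β)
    (u u' u'' g : ℝ → ℂ)
    (hu : ∀ x ∈ Set.Icc α β, HasDerivAt u (u' x) x)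
    (hu' : ∀ x ∈ Set.Icc α β, HasDerivAt u' (u'' x) x)
    (hu''c : ContinuousOn u'' (Set.Icc α β))
    (hgc : ContinuousOn g (Set.Icc α β))
    (heq : ∀ x ∈ Set.Icc α β,
      (lam : ℂ) ^ 2 * u x + (a : ℂ) * u'' x = g x) :
    (β - α) * (lam ^ 2 * ‖u β‖ ^ 2 + a * ‖u' β‖ ^ 2)
      = (∫ x in α..β, (lam ^ 2 * ‖u x‖ ^ 2 + a * ‖u' x‖ ^ 2))
        + 2 * (∫ x in α..β,
            ((x : ℂ) - (α : ℂ)) * g x * (starRingEnd ℂ) (u' x)).re := by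
  have huc : ContinuousOn u (Set.Icc α β) :=
    fun x hx => (hu x hx).continuousAt.continuousWithinAt
  have hu'c : ContinuousOn u' (Set.Icc α β) :=
    fun x hx => (hu' x hx).continuousAt.continuousWithinAt
  have hI : Set.uIcc α β = Set.Icc α β := Set.uIcc_of_le hαβ.le
  have hE : IntervalIntegrable (fun x => lam ^ 2 * ‖u x‖ ^ 2 + a * ‖u' x‖ ^ 2)
      MeasureTheory.volume α β := by
    apply ContinuousOn.intervalIntegrable
    rw [hI]
    fun_prop
  have hG : IntervalIntegrable
      (fun x : ℝ => ((x : ℂ) - (α : ℂ)) * g x * (starRingEnd ℂ) (u' x))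
      MeasureTheory.volume α β := by
    apply ContinuousOn.intervalIntegrable
    rw [hI]
    have hconj : ContinuousOn (fun x => (starRingEnd ℂ) (u' x)) (Set.Icc α β) :=
      Complex.continuous_conj.comp_continuousOn hu'c
    fun_prop
  have hGre : IntervalIntegrable
      (fun x : ℝ => (((x : ℂ) - (α : ℂ)) * g x * (starRingEnd ℂ) (u' x)).re)
      MeasureTheory.volume α β := by
    rw [intervalIntegrable_iff] at hG ⊢
    exact hG.re
  have hre : (∫ x in α..β, ((x : ℂ) - (α : ℂ)) * g x * (starRingEnd ℂ) (u' x)).re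
      = ∫ x in α..β, (((x : ℂ) - (α : ℂ)) * g x * (starRingEnd ℂ) (u' x)).re :=
    (Complex.reCLM.intervalIntegral_comp_comm hG).symm
  have hderiv : ∀ x ∈ Set.uIcc α β,
      HasDerivAt (fun x => (x - α) * (lam ^ 2 * ‖u x‖ ^ 2 + a * ‖u' x‖ ^ 2))
        ((lam ^ 2 * ‖u x‖ ^ 2 + a * ‖u' x‖ ^ 2)
          + 2 * (((x : ℂ) - (α : ℂ)) * g x * (starRingEnd ℂ) (u' x)).re) x := by
    intro x hx
    rw [hI] at hx
    have h := ((hasDerivAt_id x).sub_const α).mul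
      (((hu x hx).norm_sq.const_mul (lam ^ 2)).add ((hu' x hx).norm_sq.const_mul a))
    refine h.congr_deriv ?_
    rw [← heq x hx]
    simp [Complex.inner, pow_two]
    ring
  have hFTC := intervalIntegral.integral_eq_sub_of_hasDerivAt hderiv (hE.add (hGre.const_mul 2))
  rw [intervalIntegral.integral_add hE (hGre.const_mul 2),
    intervalIntegral.integral_const_mul] at hFTC
  rw [hre, hFTC]
  ring
end
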